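/- Let s > 7/2. There is a constant C = C(s) > 0 such that for all θ, ρ ∈ H^s(𝕋): |((𝓗ρ) ∂_x ρ − (𝓗θ) ∂_x θ, θ − ρ)_{H^{s-2}}| ≤ C (‖θ‖_{H^s} + ‖ρ‖_{H^s}) ‖θ − ρ‖²_{H^{s-2}}. -/

import Mathlib

noncomputable section
open scoped BigOperators

/-- A (complex-valued) function on the torus `𝕋 = ℝ/2πℤ`, represented by its sequence of
Fourier coefficients `f̂ : ℤ → ℂ`. -/
abbrev FC := ℤ → ℂ

namespace FC

/-- The Sobolev weight `(1+k²)^s`. -/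
def wt (s : ℝ) (k : ℤ) : ℝ := (1 + (k : ℝ) ^ 2) ^ s

/-- `c` represents a function belonging to the Sobolev space `H^s(𝕋)`. -/
def memHs (s : ℝ) (c : FC) : Prop := Summable fun k : ℤ => wt s k * ‖c k‖ ^ 2

/-- The `H^s(𝕋)` norm: `‖f‖²_{H^s} = Σ_{k∈ℤ} (1+k²)^s |f̂(k)|²`. -/
def hsNorm (s : ℝ) (c : FC) : ℝ := Real.sqrt (∑' k : ℤ, wt s k * ‖c k‖ ^ 2)

/-- The `H^s(𝕋)` inner product `(f,g)_{H^s} = Σ_{k∈ℤ} (1+k²)^s f̂(k) conj(ĝ(k))`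
(its real part; the sum is real for real-valued functions). -/
def hsInner (s : ℝ) (c d : FC) : ℝ :=
  (∑' k : ℤ, ((wt s k : ℂ) * (c k * (starRingEnd ℂ) (d k)))).re

/-- `c` represents a real-valued function (conjugate-symmetric coefficients). -/
def isReal (c : FC) : Prop := ∀ k : ℤ, c (-k) = (starRingEnd ℂ) (c k)

/-- The derivative `∂ₓ`, i.e. the Fourier multiplier `ik`. -/
def D1 (c : FC) : FC := fun k => Complex.I * (k : ℂ) * c k

/-- The pointwise product of functions, i.e. convolution of Fourier coefficients. -/
def mul (c d : FC) : FC := fun k => ∑' j : ℤ, c j * d (k - j)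

/-- The represented function, evaluated at `x ∈ ℝ`. -/
def eval (c : FC) (x : ℝ) : ℂ := ∑' k : ℤ, c k * Complex.exp (Complex.I * (k : ℂ) * (x : ℂ))

/-- The `L^∞` norm (supremum of the represented periodic function over ℝ). -/
def linfty (c : FC) : ℝ := ⨆ x : ℝ, ‖eval c x‖

/-- The `W^{1,∞}` norm. -/
def w1infty (c : FC) : ℝ := linfty c + linfty (D1 c)

/-- A Fourier multiplier operator with real symbol `m`. -/
def mult (m : ℤ → ℝ) (c : FC) : FC := fun k => (m k : ℂ) * c k

/-- The operator `(1-∂ₓ²)⁻¹`, i.e. the Fourier multiplier `(1+k²)⁻¹`. -/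
def helmInv : FC → FC := mult fun k => (1 + (k : ℝ) ^ 2)⁻¹

/-- The operator `1-∂ₓ²`, i.e. the Fourier multiplier `1+k²`. -/
def helm : FC → FC := mult fun k => 1 + (k : ℝ) ^ 2

/-- The operator `T̃_ε = (1-ε²∂ₓ²)⁻¹`, i.e. the Fourier multiplier `(1+ε²k²)⁻¹`. -/
def T (ε : ℝ) : FC → FC := mult fun k => (1 + ε ^ 2 * (k : ℝ) ^ 2)⁻¹

/-- The periodic Hilbert transform, i.e. the Fourier multiplier `-i·sgn(k)`. -/
def hilbert (c : FC) : FC := fun k => -Complex.I * (Int.sign k : ℂ) * c k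

/-- The Friedrichs-type mollifier `J_ε`, the Fourier multiplier `ĵ(εk)`. -/
def Jmol (jhat : ℝ → ℝ) (ε : ℝ) : FC → FC := mult fun k => jhat (ε * (k : ℝ))

/-- The generalized Lie derivative `𝓛_ξ f = ξ ∂ₓ f + (∂ₓ ξ) f`. -/
def lie (ξ c : FC) : FC := mul ξ (D1 c) + mul (D1 ξ) c

/-- `𝓛²_ξ f = 𝓛_ξ (𝓛_ξ f)`. -/
def lie2 (ξ c : FC) : FC := lie ξ (lie ξ c)

/-- The coefficientwise sum `Σ_{k∈ℕ} F k` of a sequence of functions. -/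
def tsumFC (F : ℕ → FC) : FC := fun m => ∑' k : ℕ, F k m

/-- The norm on the product space `H^{s₁}×H^{s₂}`. -/
def pairNorm (s₁ s₂ : ℝ) (c d : FC) : ℝ := Real.sqrt (hsNorm s₁ c ^ 2 + hsNorm s₂ d ^ 2)

/-- The inner product on the product space `H^{s₁}×H^{s₂}`:
`((c₁,d₁),(c₂,d₂)) ↦ (c₁,c₂)_{H^{s₁}} + (d₁,d₂)_{H^{s₂}}`. -/
def pairInner (s₁ s₂ : ℝ) (c₁ d₁ c₂ d₂ : FC) : ℝ := hsInner s₁ c₁ c₂ + hsInner s₂ d₁ d₂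

end FC

/-!
Write `w = θ - ρ` and `⟨k⟩ = (1 + k²)^(1/2)`. Since
`(𝓗ρ) ∂ₓρ - (𝓗θ) ∂ₓθ = -((∂ₓθ) 𝓗w + (𝓗ρ) ∂ₓw)`, two pairings with `w` in `H^r`, `r = s - 2`,
have to be bounded. On the Fourier side each is a sum over `(k, m)` of
`⟨k⟩^(2r) û(k - m) v̂(m) conj ŵ(k)`.

For `u = ∂ₓθ`, `v = 𝓗w`, Peetre's inequality distributes `⟨k⟩^r` over `m` and `k - m`, and Young's
convolution inequality `ℓ¹ * ℓ² ⊆ ℓ²` finishes.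

For `u = 𝓗ρ`, `v = ∂ₓw`, a derivative seems to be lost. Since `u` is real-valued, exchanging `k` and
`m` conjugates `û(k - m)`, so symmetrizing the sum replaces the weight `m ⟨k⟩^(2r)` by
`m ⟨k⟩^(2r) - k ⟨m⟩^(2r)`, which is `O(⟨k⟩^r ⟨m⟩^r ⟨k - m⟩^(r+1))`: the derivative has moved
onto `u`. Finally `Σ ⟨k⟩^(s-1) |ρ̂(k)|` is controlled by the `H^s` norm.
-/

lemma mul_rpow_sub_rpow_le {u v r : ℝ} (hu : 0 < u) (hv : 0 < v) (hr : 0 ≤ r) :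
    v * (u ^ r - v ^ r) ≤ r * (u - v) * u ^ r := by
  have hlog : 1 - u / v ≤ Real.log (v / u) := by
    simpa only [inv_div] using Real.one_sub_inv_le_log_of_pos (div_pos hv hu)
  have hquot : 1 + r * (1 - u / v) ≤ v ^ r / u ^ r := by
    rw [← Real.div_rpow hv.le hu.le, Real.rpow_def_of_pos (div_pos hv hu)]
    linarith [Real.add_one_le_exp (Real.log (v / u) * r), mul_le_mul_of_nonneg_left hlog hr]
  have hmul := mul_le_mul_of_nonneg_left ((le_div_iff₀ (Real.rpow_pos_of_pos hu r)).1 hquot) hv.le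
  have hexpand : v * ((1 + r * (1 - u / v)) * u ^ r) = v * u ^ r - r * (u - v) * u ^ r := by
    field_simp
    ring
  linarith

lemma summable_and_tsum_mul_le_sqrt_mul_sqrt {ι : Type*} {f g : ι → ℝ} (hf : ∀ i, 0 ≤ f i)
    (hg : ∀ i, 0 ≤ g i) (sf : Summable fun i => f i ^ 2) (sg : Summable fun i => g i ^ 2) :
    (Summable fun i => f i * g i) ∧ ∑' i, f i * g i ≤ √(∑' i, f i ^ 2) * √(∑' i, g i ^ 2) := by
  simpa only [Real.rpow_two, ← Real.sqrt_eq_rpow] using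
    Real.summable_and_inner_le_Lp_mul_Lq_tsum_of_nonneg Real.HolderConjugate.two_two hf hg
      (by simpa only [Real.rpow_two] using sf) (by simpa only [Real.rpow_two] using sg)

section Young

variable {G : Type*} [AddGroup G] {g : G → ℝ}

lemma hasSum_mul_sub_fst {f : G → ℝ} (hg : ∀ n, 0 ≤ g n) (hf : ∀ n, 0 ≤ f n) (sg : Summable g)
    (sf : Summable f) :
    HasSum (fun p : G × G => g (p.1 - p.2) * f p.1) ((∑' n, g n) * ∑' n, f n) :=
  (((Equiv.refl G).prodShear Equiv.subLeft).trans (Equiv.prodComm G G)).hasSum_iff.2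
    (sg.hasSum.mul sf.hasSum (sg.mul_of_nonneg sf hg hf))

lemma hasSum_mul_sub_snd {f : G → ℝ} (hg : ∀ n, 0 ≤ g n) (hf : ∀ n, 0 ≤ f n) (sg : Summable g)
    (sf : Summable f) :
    HasSum (fun p : G × G => g (p.1 - p.2) * f p.2) ((∑' n, g n) * ∑' n, f n) :=
  (((Equiv.prodComm G G).trans ((Equiv.refl G).prodShear Equiv.subRight)).trans
    (Equiv.prodComm G G)).hasSum_iff.2 (sg.hasSum.mul sf.hasSum (sg.mul_of_nonneg sf hg hf))

theorem summable_and_tsum_young {x y : G → ℝ} (hg : ∀ n, 0 ≤ g n) (hx : ∀ n, 0 ≤ x n)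
    (hy : ∀ n, 0 ≤ y n) (sg : Summable g) (sx : Summable fun n => x n ^ 2)
    (sy : Summable fun n => y n ^ 2) :
    (Summable fun p : G × G => g (p.1 - p.2) * (x p.1 * y p.2)) ∧
      ∑' p : G × G, g (p.1 - p.2) * (x p.1 * y p.2) ≤
        (∑' n, g n) * (√(∑' n, x n ^ 2) * √(∑' n, y n ^ 2)) := by
  have hX := hasSum_mul_sub_fst hg (fun n => sq_nonneg (x n)) sg sx
  have hY := hasSum_mul_sub_snd hg (fun n => sq_nonneg (y n)) sg sy
  have hS : 0 ≤ ∑' n, g n := tsum_nonneg hg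
  -- Cauchy–Schwarz after splitting the kernel as `g = √g * √g`.
  have hcs := summable_and_tsum_mul_le_sqrt_mul_sqrt
    (f := fun p : G × G => √(g (p.1 - p.2)) * x p.1)
    (g := fun p : G × G => √(g (p.1 - p.2)) * y p.2)
    (fun p => mul_nonneg (Real.sqrt_nonneg _) (hx _))
    (fun p => mul_nonneg (Real.sqrt_nonneg _) (hy _))
    (by simpa only [mul_pow, Real.sq_sqrt (hg _)] using hX.summable)
    (by simpa only [mul_pow, Real.sq_sqrt (hg _)] using hY.summable)
  have hprod (a b c : G) : √(g a) * x b * (√(g a) * y c) = g a * (x b * y c) := by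
    rw [mul_mul_mul_comm, Real.mul_self_sqrt (hg a)]
  simp only [hprod, mul_pow, Real.sq_sqrt (hg _), hX.tsum_eq, hY.tsum_eq, Real.sqrt_mul hS] at hcs
  rwa [mul_mul_mul_comm, Real.mul_self_sqrt hS] at hcs

end Young

lemma hasSum_add_conj_swap {ι : Type*} {F : ι × ι → ℂ} (hF : Summable F) :
    HasSum (fun p => F p + (starRingEnd ℂ) (F p.swap)) ((2 * (∑' p, F p).re : ℝ) : ℂ) := by
  rw [← Complex.add_conj]
  exact hF.hasSum.add (Complex.hasSum_conj'.2 ((Equiv.prodComm ι ι).hasSum_iff.2 hF.hasSum))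

namespace FC

open scoped ComplexConjugate

section Weight

lemma one_add_sq_pos (k : ℤ) : (0 : ℝ) < 1 + (k : ℝ) ^ 2 := by positivity

lemma wt_pos (s : ℝ) (k : ℤ) : 0 < wt s k := Real.rpow_pos_of_pos (one_add_sq_pos k) s

lemma wt_zero (k : ℤ) : wt 0 k = 1 := Real.rpow_zero _

lemma wt_add (a b : ℝ) (k : ℤ) : wt (a + b) k = wt a k * wt b k :=
  Real.rpow_add (one_add_sq_pos k) a b

lemma wt_mono {a b : ℝ} (h : a ≤ b) (k : ℤ) : wt a k ≤ wt b k :=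
  Real.rpow_le_rpow_of_exponent_le (by linarith [sq_nonneg (k : ℝ)]) h

lemma wt_half_sq (a : ℝ) (k : ℤ) : wt (a / 2) k ^ 2 = wt a k := by
  rw [sq, ← wt_add, add_halves]

lemma wt_half_eq_rpow (a : ℝ) (k : ℤ) : wt (a / 2) k = wt (1 / 2) k ^ a := by
  rw [wt, wt, ← Real.rpow_mul (one_add_sq_pos k).le]
  ring_nf

lemma wt_neg (a : ℝ) (k : ℤ) : wt a (-k) = wt a k := by
  simp only [wt, Int.cast_neg, neg_sq]

lemma abs_le_wt_half (k : ℤ) : |(k : ℝ)| ≤ wt (1 / 2) k := by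
  rw [wt, ← Real.sqrt_eq_rpow]
  exact Real.abs_le_sqrt (by linarith)

lemma wt_half_sub_wt_half_le (k m : ℤ) : wt (1 / 2) k - wt (1 / 2) m ≤ |((k - m : ℤ) : ℝ)| := by
  have hsq (j : ℤ) : wt (1 / 2) j ^ 2 = 1 + (j : ℝ) ^ 2 := by
    rw [wt_half_sq, wt, Real.rpow_one]
  have hcross : (m : ℝ) * ((k - m : ℤ) : ℝ) ≤ wt (1 / 2) m * |((k - m : ℤ) : ℝ)| :=
    (le_abs_self _).trans ((abs_mul _ _).trans_le
      (mul_le_mul_of_nonneg_right (abs_le_wt_half m) (abs_nonneg _)))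
  have hsum : wt (1 / 2) k ≤ wt (1 / 2) m + |((k - m : ℤ) : ℝ)| := by
    refine le_of_sq_le_sq ?_ (add_nonneg (wt_pos _ _).le (abs_nonneg _))
    rw [add_sq, hsq, hsq, sq_abs]
    push_cast at hcross ⊢
    linarith
  linarith

lemma wt_le_two_rpow_mul {a : ℝ} (ha : 0 ≤ a) (k m : ℤ) :
    wt a k ≤ 2 ^ a * (wt a m * wt a (k - m)) := by
  have hbase : 1 + (k : ℝ) ^ 2 ≤ 2 * ((1 + (m : ℝ) ^ 2) * (1 + ((k - m : ℤ) : ℝ) ^ 2)) := by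
    push_cast
    nlinarith [sq_nonneg ((k : ℝ) - 2 * m), sq_nonneg ((m : ℝ) * (k - m))]
  calc wt a k ≤ (2 * ((1 + (m : ℝ) ^ 2) * (1 + ((k - m : ℤ) : ℝ) ^ 2))) ^ a :=
        Real.rpow_le_rpow (one_add_sq_pos k).le hbase ha
    _ = 2 ^ a * (wt a m * wt a (k - m)) := by
        rw [Real.mul_rpow zero_le_two (by positivity),
          Real.mul_rpow (one_add_sq_pos _).le (one_add_sq_pos _).le, wt, wt]

lemma abs_mul_wt_half_sub_wt_half_le {r : ℝ} (hr : 0 ≤ r) (k m : ℤ) :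
    |(m : ℝ)| * (wt (r / 2) k - wt (r / 2) m) ≤
      r * 2 ^ (r / 2) * (wt (r / 2) m * wt ((r + 1) / 2) (k - m)) := by
  have hpos := wt_pos
  rcases le_total (wt (r / 2) k) (wt (r / 2) m) with hkm | hmk
  · have hrhs : 0 ≤ wt (r / 2) m * wt ((r + 1) / 2) (k - m) := (mul_pos (hpos _ _) (hpos _ _)).le
    exact (mul_nonpos_of_nonneg_of_nonpos (abs_nonneg _) (sub_nonpos.2 hkm)).trans (by positivity)
  calc |(m : ℝ)| * (wt (r / 2) k - wt (r / 2) m)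
      ≤ wt (1 / 2) m * (wt (1 / 2) k ^ r - wt (1 / 2) m ^ r) := by
        rw [← wt_half_eq_rpow, ← wt_half_eq_rpow]
        exact mul_le_mul_of_nonneg_right (abs_le_wt_half m) (sub_nonneg.2 hmk)
    _ ≤ r * (wt (1 / 2) k - wt (1 / 2) m) * wt (r / 2) k := by
        rw [wt_half_eq_rpow r k]
        exact mul_rpow_sub_rpow_le (hpos _ _) (hpos _ _) hr
    _ ≤ r * wt (1 / 2) (k - m) * (2 ^ (r / 2) * (wt (r / 2) m * wt (r / 2) (k - m))) := by
        have := hpos (r / 2) k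
        have := hpos (1 / 2) (k - m)
        gcongr
        · exact (wt_half_sub_wt_half_le k m).trans (abs_le_wt_half _)
        · exact wt_le_two_rpow_mul (by positivity) k m
    _ = r * 2 ^ (r / 2) * (wt (r / 2) m * wt ((r + 1) / 2) (k - m)) := by
        rw [add_div, wt_add]
        ring

theorem abs_mul_wt_sub_mul_wt_le {r : ℝ} (hr : 0 ≤ r) (k m : ℤ) :
    |(m : ℝ) * wt r k - k * wt r m| ≤
      (2 * r * 2 ^ (r / 2) + 1) *
        (wt (r / 2) k * wt (r / 2) m * wt ((r + 1) / 2) (k - m)) := by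
  wlog h : wt (r / 2) m ≤ wt (r / 2) k generalizing k m
  · rw [abs_sub_comm, mul_comm (wt (r / 2) k), ← neg_sub m k, wt_neg]
    exact this m k (le_of_not_ge h)
  have hpos := wt_pos
  have hk := hpos (r / 2) k
  have hm := hpos (r / 2) m
  have hkm := hpos ((r + 1) / 2) (k - m)
  have hdecomp : (m : ℝ) * wt r k - k * wt r m =
      m * ((wt (r / 2) k - wt (r / 2) m) * (wt (r / 2) k + wt (r / 2) m)) -
        ((k - m : ℤ) : ℝ) * (wt (r / 2) m * wt (r / 2) m) := by
    rw [← wt_half_sq r k, ← wt_half_sq r m]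
    push_cast
    ring
  have hcommutator :
      |(m : ℝ)| * ((wt (r / 2) k - wt (r / 2) m) * (wt (r / 2) k + wt (r / 2) m)) ≤
        r * 2 ^ (r / 2) * (wt (r / 2) m * wt ((r + 1) / 2) (k - m)) * (2 * wt (r / 2) k) := by
    rw [← mul_assoc]
    exact mul_le_mul (abs_mul_wt_half_sub_wt_half_le hr k m) (by linarith) (by positivity)
      (by positivity)
  have hremainder : |((k - m : ℤ) : ℝ)| * (wt (r / 2) m * wt (r / 2) m) ≤
      wt ((r + 1) / 2) (k - m) * (wt (r / 2) k * wt (r / 2) m) := by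
    have := (abs_le_wt_half (k - m)).trans (wt_mono (show 1 / 2 ≤ (r + 1) / 2 by linarith) _)
    gcongr
  rw [hdecomp]
  refine (abs_sub _ _).trans ?_
  rw [abs_mul (m : ℝ), abs_mul ((k - m : ℤ) : ℝ),
    abs_of_nonneg (mul_nonneg (sub_nonneg.2 h) (add_pos hk hm).le), abs_of_pos (mul_pos hm hm)]
  linarith

lemma summable_wt {a : ℝ} (ha : a < -1 / 2) : Summable (wt a) := by
  refine Summable.of_norm_bounded_eventually
    (Real.summable_abs_int_rpow (b := -(2 * a)) (by linarith)) ?_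
  filter_upwards [(Set.finite_singleton (0 : ℤ)).compl_mem_cofinite] with k hk
  have hk0 : (0 : ℝ) < (k : ℝ) ^ 2 := by
    have : (k : ℝ) ≠ 0 := Int.cast_ne_zero.2 hk
    positivity
  rw [Real.norm_of_nonneg (wt_pos a k).le, neg_neg, Real.rpow_mul (abs_nonneg _), Real.rpow_two,
    sq_abs, wt]
  exact Real.rpow_le_rpow_of_nonpos hk0 (by linarith) (by linarith)

end Weight

section Norms

/-- The sequence `⟨k⟩^a |ĉ(k)|`, with `⟨k⟩ = (1 + k²)^(1/2)`: its `ℓ²` norm is the `H^a` norm and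
its `ℓ¹` norm the weighted Wiener norm. -/
def weightedNorm (a : ℝ) (c : FC) (k : ℤ) : ℝ := wt (a / 2) k * ‖c k‖

/-- The norm `Σ ⟨k⟩^a |ĉ(k)|` of the weighted Wiener algebra; `0` when the sum diverges, so it is
used together with `Summable (weightedNorm a c)`. It plays the role of a `W^{a,∞}` norm. -/
def wienerNorm (a : ℝ) (c : FC) : ℝ := ∑' k, weightedNorm a c k

variable {a b : ℝ} {c d : FC}

lemma weightedNorm_nonneg (a : ℝ) (c : FC) (k : ℤ) : 0 ≤ weightedNorm a c k :=
  mul_nonneg (wt_pos _ _).le (norm_nonneg _)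

lemma weightedNorm_sq (a : ℝ) (c : FC) (k : ℤ) : weightedNorm a c k ^ 2 = wt a k * ‖c k‖ ^ 2 := by
  rw [weightedNorm, mul_pow, wt_half_sq]

lemma memHs_iff_summable_weightedNorm_sq :
    memHs a c ↔ Summable fun k => weightedNorm a c k ^ 2 := by
  simp only [memHs, weightedNorm_sq]

lemma hsNorm_eq_sqrt_tsum_weightedNorm_sq (a : ℝ) (c : FC) :
    hsNorm a c = √(∑' k, weightedNorm a c k ^ 2) := by
  simp only [hsNorm, weightedNorm_sq]

lemma hsNorm_nonneg (a : ℝ) (c : FC) : 0 ≤ hsNorm a c := Real.sqrt_nonneg _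

lemma wienerNorm_nonneg (a : ℝ) (c : FC) : 0 ≤ wienerNorm a c :=
  tsum_nonneg (weightedNorm_nonneg a c)

lemma memHs_of_weightedNorm_le (hd : memHs b d)
    (h : ∀ k, weightedNorm a c k ≤ weightedNorm b d k) : memHs a c :=
  memHs_iff_summable_weightedNorm_sq.2 <|
    (memHs_iff_summable_weightedNorm_sq.1 hd).of_nonneg_of_le (fun _ => sq_nonneg _)
      fun k => pow_le_pow_left₀ (weightedNorm_nonneg a c k) (h k) 2

lemma hsNorm_le_of_weightedNorm_le (hd : memHs b d)
    (h : ∀ k, weightedNorm a c k ≤ weightedNorm b d k) : hsNorm a c ≤ hsNorm b d := by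
  rw [hsNorm_eq_sqrt_tsum_weightedNorm_sq, hsNorm_eq_sqrt_tsum_weightedNorm_sq]
  exact Real.sqrt_le_sqrt <| Summable.tsum_le_tsum
    (fun k => pow_le_pow_left₀ (weightedNorm_nonneg a c k) (h k) 2)
    (memHs_iff_summable_weightedNorm_sq.1 (memHs_of_weightedNorm_le hd h))
    (memHs_iff_summable_weightedNorm_sq.1 hd)

lemma summable_weightedNorm_of_le (hd : Summable (weightedNorm b d))
    (h : ∀ k, weightedNorm a c k ≤ weightedNorm b d k) : Summable (weightedNorm a c) :=
  hd.of_nonneg_of_le (weightedNorm_nonneg a c) h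

lemma wienerNorm_le_of_weightedNorm_le (hd : Summable (weightedNorm b d))
    (h : ∀ k, weightedNorm a c k ≤ weightedNorm b d k) : wienerNorm a c ≤ wienerNorm b d :=
  (summable_weightedNorm_of_le hd h).tsum_le_tsum h hd

lemma weightedNorm_mono (h : a ≤ b) (c : FC) (k : ℤ) : weightedNorm a c k ≤ weightedNorm b c k :=
  mul_le_mul_of_nonneg_right (wt_mono (by linarith) k) (norm_nonneg _)

lemma norm_hilbert_le (c : FC) (k : ℤ) : ‖hilbert c k‖ ≤ ‖c k‖ := by
  rw [hilbert, norm_mul, norm_mul, norm_neg, Complex.norm_I, one_mul]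
  refine mul_le_of_le_one_left (norm_nonneg _) ?_
  rcases Int.sign_trichotomy k with h | h | h <;> simp [h]

lemma norm_D1 (c : FC) (k : ℤ) : ‖D1 c k‖ = |(k : ℝ)| * ‖c k‖ := by
  rw [D1, norm_mul, norm_mul, Complex.norm_I, one_mul, Complex.norm_intCast]

lemma weightedNorm_hilbert_le (a : ℝ) (c : FC) (k : ℤ) :
    weightedNorm a (hilbert c) k ≤ weightedNorm a c k :=
  mul_le_mul_of_nonneg_left (norm_hilbert_le c k) (wt_pos _ _).le

lemma weightedNorm_D1_le (a : ℝ) (c : FC) (k : ℤ) :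
    weightedNorm a (D1 c) k ≤ weightedNorm (a + 1) c k := by
  rw [weightedNorm, weightedNorm, norm_D1, add_div, wt_add, mul_assoc]
  have := wt_pos (a / 2) k
  gcongr
  exact abs_le_wt_half k

lemma memHs_mono (h : a ≤ b) (hc : memHs b c) : memHs a c :=
  memHs_of_weightedNorm_le hc (weightedNorm_mono h c)

lemma memHs_hilbert (hc : memHs a c) : memHs a (hilbert c) :=
  memHs_of_weightedNorm_le hc (weightedNorm_hilbert_le a c)

lemma memHs_D1 (hc : memHs (a + 1) c) : memHs a (D1 c) :=
  memHs_of_weightedNorm_le hc (weightedNorm_D1_le a c)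

lemma memHs_sub (hc : memHs a c) (hd : memHs a d) : memHs a (c - d) := by
  refine ((hc.add hd).mul_left 2).of_nonneg_of_le
    (fun k => mul_nonneg (wt_pos _ _).le (sq_nonneg _)) fun k => ?_
  have hsq : ‖(c - d) k‖ ^ 2 ≤ 2 * (‖c k‖ ^ 2 + ‖d k‖ ^ 2) :=
    (pow_le_pow_left₀ (norm_nonneg _) (norm_sub_le _ _) 2).trans add_sq_le
  linarith [mul_le_mul_of_nonneg_left hsq (wt_pos a k).le]

theorem summable_weightedNorm_and_wienerNorm_le (hab : a + 1 / 2 < b) (hc : memHs b c) :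
    Summable (weightedNorm a c) ∧ wienerNorm a c ≤ √(∑' k, wt (a - b) k) * hsNorm b c := by
  have hsplit (k : ℤ) : weightedNorm a c k = wt ((a - b) / 2) k * weightedNorm b c k := by
    rw [weightedNorm, weightedNorm, ← mul_assoc, ← wt_add]
    ring_nf
  have hcs := summable_and_tsum_mul_le_sqrt_mul_sqrt (f := wt ((a - b) / 2))
    (fun k => (wt_pos _ k).le) (weightedNorm_nonneg b c)
    (by simpa only [wt_half_sq] using summable_wt (show a - b < -1 / 2 by linarith))
    (memHs_iff_summable_weightedNorm_sq.1 hc)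
  simp only [← hsplit, wt_half_sq, ← hsNorm_eq_sqrt_tsum_weightedNorm_sq] at hcs
  exact hcs

end Norms

section Algebra

lemma D1_sub (c d : FC) : D1 (c - d) = D1 c - D1 d := by
  funext k
  simp only [D1, Pi.sub_apply, mul_sub]

lemma hilbert_sub (c d : FC) : hilbert (c - d) = hilbert c - hilbert d := by
  funext k
  simp only [hilbert, Pi.sub_apply, mul_sub]

lemma isReal_hilbert {c : FC} (h : isReal c) : isReal (hilbert c) := by
  intro k
  rw [hilbert, hilbert, h k]
  simp

lemma mul_apply_eq_tsum_sub (c d : FC) (k : ℤ) : mul c d k = ∑' m, c (k - m) * d m := by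
  rw [mul, ← (Equiv.subLeft k).tsum_eq]
  simp only [Equiv.subLeft_apply, sub_sub_cancel]

protected lemma mul_comm (c d : FC) : mul c d = mul d c := by
  funext k
  rw [mul_apply_eq_tsum_sub, mul]
  exact tsum_congr fun j => mul_comm _ _

lemma summable_mul {c d : FC} (hc : memHs 0 c) (hd : memHs 0 d) (k : ℤ) :
    Summable fun j : ℤ => c j * d (k - j) := by
  simp only [memHs, wt_zero, one_mul] at hc hd
  have hd_shift : Summable fun j : ℤ => ‖d (k - j)‖ ^ 2 := (Equiv.subLeft k).summable_iff.2 hd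
  have hnorm := (summable_and_tsum_mul_le_sqrt_mul_sqrt (fun j => norm_nonneg (c j))
    (fun j => norm_nonneg (d (k - j))) hc hd_shift).1
  exact .of_norm (by simpa only [norm_mul] using hnorm)

lemma mul_sub_mul_eq {a b c d : FC} (ha : memHs 0 a) (hb : memHs 0 b) (hc : memHs 0 c)
    (hd : memHs 0 d) : mul a c - mul b d = -(mul (b - a) d + mul a (d - c)) := by
  funext k
  rw [Pi.sub_apply, Pi.neg_apply, Pi.add_apply]
  simp only [mul]
  rw [← (summable_mul ha hc k).tsum_sub (summable_mul hb hd k),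
    ← (summable_mul (memHs_sub hb ha) hd k).tsum_add (summable_mul ha (memHs_sub hd hc) k),
    ← tsum_neg]
  refine tsum_congr fun j => ?_
  simp only [Pi.sub_apply]
  ring

lemma hsInner_neg_left (r : ℝ) (c w : FC) : hsInner r (-c) w = -hsInner r c w := by
  simp only [hsInner, Pi.neg_apply, neg_mul, mul_neg, tsum_neg, Complex.neg_re]

lemma hsInner_add_left {r : ℝ} {c d w : FC}
    (hc : Summable fun k => (wt r k : ℂ) * (c k * conj (w k)))
    (hd : Summable fun k => (wt r k : ℂ) * (d k * conj (w k))) :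
    hsInner r (c + d) w = hsInner r c w + hsInner r d w := by
  rw [hsInner, hsInner, hsInner, ← Complex.add_re, ← hc.tsum_add hd]
  simp only [Pi.add_apply, add_mul, mul_add]

end Algebra

section Trilinear

/-- The terms of the double series that expresses `(u v, w)_{H^r}` through the Fourier coefficients
of `u`, `v` and `w`. -/
def trilinearTerm (r : ℝ) (u v w : FC) (p : ℤ × ℤ) : ℂ :=
  wt r p.1 * (u (p.1 - p.2) * v p.2 * conj (w p.1))

variable {r : ℝ} {u v w : FC}

lemma tsum_trilinearTerm (r : ℝ) (u v w : FC) (k : ℤ) :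
    ∑' m, trilinearTerm r u v w (k, m) = wt r k * (mul u v k * conj (w k)) := by
  simp only [trilinearTerm]
  rw [tsum_mul_left, tsum_mul_right, mul_apply_eq_tsum_sub]

lemma summable_hsInner_mul (h : Summable (trilinearTerm r u v w)) :
    Summable fun k => (wt r k : ℂ) * (mul u v k * conj (w k)) := by
  simpa only [tsum_trilinearTerm] using h.prod

lemma hsInner_mul (h : Summable (trilinearTerm r u v w)) :
    hsInner r (mul u v) w = (∑' p, trilinearTerm r u v w p).re := by
  simp only [h.tsum_prod, tsum_trilinearTerm, hsInner]

lemma norm_trilinearTerm (r : ℝ) (u v w : FC) (k m : ℤ) :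
    ‖trilinearTerm r u v w (k, m)‖ = wt r k * (‖u (k - m)‖ * ‖v m‖ * ‖w k‖) := by
  rw [trilinearTerm, norm_mul, norm_mul, norm_mul, RCLike.norm_conj, Complex.norm_real,
    Real.norm_of_nonneg (wt_pos _ _).le]

lemma summable_and_norm_tsum_le {a C : ℝ} (hC : 0 ≤ C) (hu : Summable (weightedNorm a u))
    (hv : memHs r v) (hw : memHs r w) {F : ℤ × ℤ → ℂ}
    (hF : ∀ k m, ‖F (k, m)‖ ≤
      C * (weightedNorm a u (k - m) * (weightedNorm r w k * weightedNorm r v m))) :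
    Summable F ∧ ‖∑' p, F p‖ ≤ C * wienerNorm a u * (hsNorm r v * hsNorm r w) := by
  obtain ⟨hsum, hle⟩ := summable_and_tsum_young (weightedNorm_nonneg a u)
    (weightedNorm_nonneg r w) (weightedNorm_nonneg r v) hu
    (memHs_iff_summable_weightedNorm_sq.1 hw) (memHs_iff_summable_weightedNorm_sq.1 hv)
  rw [← hsNorm_eq_sqrt_tsum_weightedNorm_sq, ← hsNorm_eq_sqrt_tsum_weightedNorm_sq] at hle
  have hbound (p : ℤ × ℤ) := hF p.1 p.2
  refine ⟨.of_norm_bounded (hsum.mul_left C) hbound,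
    (tsum_of_norm_bounded (hsum.mul_left C).hasSum hbound).trans ?_⟩
  rw [tsum_mul_left, mul_assoc, mul_comm (hsNorm r v)]
  exact mul_le_mul_of_nonneg_left hle hC

lemma norm_trilinearTerm_le (hr : 0 ≤ r) (u v w : FC) (k m : ℤ) :
    ‖trilinearTerm r u v w (k, m)‖ ≤
      2 ^ (r / 2) * (weightedNorm r u (k - m) * (weightedNorm r w k * weightedNorm r v m)) := by
  have := wt_pos (r / 2) k
  calc ‖trilinearTerm r u v w (k, m)‖
      = wt (r / 2) k * wt (r / 2) k * (‖u (k - m)‖ * ‖v m‖ * ‖w k‖) := by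
        rw [norm_trilinearTerm, ← wt_half_sq r k, sq]
    _ ≤ wt (r / 2) k * (2 ^ (r / 2) * (wt (r / 2) m * wt (r / 2) (k - m))) *
          (‖u (k - m)‖ * ‖v m‖ * ‖w k‖) := by
        gcongr
        exact wt_le_two_rpow_mul (by positivity) k m
    _ = _ := by
        simp only [weightedNorm]
        ring

theorem summable_trilinearTerm_and_abs_hsInner_mul_le (hr : 0 ≤ r)
    (hu : Summable (weightedNorm r u)) (hv : memHs r v) (hw : memHs r w) :
    Summable (trilinearTerm r u v w) ∧
      |hsInner r (mul u v) w| ≤ 2 ^ (r / 2) * wienerNorm r u * (hsNorm r v * hsNorm r w) := by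
  obtain ⟨hsum, hle⟩ := summable_and_norm_tsum_le (by positivity) hu hv hw
    (norm_trilinearTerm_le hr u v w)
  refine ⟨hsum, ?_⟩
  rw [hsInner_mul hsum]
  exact (Complex.abs_re_le_norm _).trans hle

lemma trilinearTerm_D1_add_conj_swap (r : ℝ) (hu : isReal u) (w : FC) (k m : ℤ) :
    trilinearTerm r u (D1 w) w (k, m) + conj (trilinearTerm r u (D1 w) w (m, k)) =
      ((m * wt r k - k * wt r m : ℝ) : ℂ) * (Complex.I * u (k - m) * w m * conj (w k)) := by
  have hconj : conj (u (m - k)) = u (k - m) := by rw [← hu, neg_sub]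
  simp only [trilinearTerm, D1, map_mul, hconj, Complex.conj_conj, Complex.conj_ofReal,
    Complex.conj_I, map_intCast]
  push_cast
  ring

lemma norm_trilinearTerm_D1_add_conj_swap_le (hr : 0 ≤ r) (hu : isReal u) (w : FC) (k m : ℤ) :
    ‖trilinearTerm r u (D1 w) w (k, m) + conj (trilinearTerm r u (D1 w) w (m, k))‖ ≤
      (2 * r * 2 ^ (r / 2) + 1) *
        (weightedNorm (r + 1) u (k - m) * (weightedNorm r w k * weightedNorm r w m)) := by
  rw [trilinearTerm_D1_add_conj_swap r hu, norm_mul, norm_mul, norm_mul, norm_mul,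
    RCLike.norm_conj, Complex.norm_I, Complex.norm_real, Real.norm_eq_abs, one_mul]
  calc _ ≤ (2 * r * 2 ^ (r / 2) + 1) *
          (wt (r / 2) k * wt (r / 2) m * wt ((r + 1) / 2) (k - m)) *
          (‖u (k - m)‖ * ‖w m‖ * ‖w k‖) := by
        gcongr
        exact abs_mul_wt_sub_mul_wt_le hr k m
    _ = _ := by
        simp only [weightedNorm]
        ring

theorem summable_trilinearTerm_and_abs_hsInner_mul_D1_self_le (hr : 0 ≤ r)
    (hu : Summable (weightedNorm (r + 1) u)) (hreal : isReal u) (hw : memHs (r + 1) w) :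
    Summable (trilinearTerm r u (D1 w) w) ∧
      |hsInner r (mul u (D1 w)) w| ≤
        (r * 2 ^ (r / 2) + 1 / 2) * wienerNorm (r + 1) u * hsNorm r w ^ 2 := by
  have hr1 : r ≤ r + 1 := by linarith
  have hwr : memHs r w := memHs_mono hr1 hw
  have hsum := (summable_trilinearTerm_and_abs_hsInner_mul_le hr
    (summable_weightedNorm_of_le hu (weightedNorm_mono hr1 u)) (memHs_D1 hw) hwr).1
  obtain ⟨-, hle⟩ := summable_and_norm_tsum_le (by positivity) hu hwr hwr
    (F := fun p => trilinearTerm r u (D1 w) w p + conj (trilinearTerm r u (D1 w) w p.swap))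
    (norm_trilinearTerm_D1_add_conj_swap_le hr hreal w)
  rw [(hasSum_add_conj_swap hsum).tsum_eq, Complex.norm_real, Real.norm_eq_abs, abs_mul,
    abs_two] at hle
  refine ⟨hsum, ?_⟩
  rw [hsInner_mul hsum]
  linarith

end Trilinear

section HilbertTransport

variable {r : ℝ} {θ ρ w : FC}

lemma hilbert_mul_D1_sub (hθ : memHs 1 θ) (hρ : memHs 1 ρ) :
    mul (hilbert ρ) (D1 ρ) - mul (hilbert θ) (D1 θ) =
      -(mul (D1 θ) (hilbert (θ - ρ)) + mul (hilbert ρ) (D1 (θ - ρ))) := by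
  have hH {c : FC} (hc : memHs 1 c) : memHs 0 (hilbert c) :=
    memHs_hilbert (memHs_mono zero_le_one hc)
  have hD {c : FC} (hc : memHs 1 c) : memHs 0 (D1 c) := memHs_D1 (by rwa [zero_add])
  rw [mul_sub_mul_eq (hH hρ) (hH hθ) (hD hρ) (hD hθ), ← hilbert_sub, ← D1_sub, FC.mul_comm (D1 θ)]

lemma summable_trilinearTerm_and_abs_hsInner_D1_mul_hilbert_le (hr : 0 ≤ r)
    (hθ : Summable (weightedNorm (r + 1) θ)) (hw : memHs r w) :
    Summable (trilinearTerm r (D1 θ) (hilbert w) w) ∧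
      |hsInner r (mul (D1 θ) (hilbert w)) w| ≤
        2 ^ (r / 2) * wienerNorm (r + 1) θ * hsNorm r w ^ 2 := by
  obtain ⟨hsum, hle⟩ := summable_trilinearTerm_and_abs_hsInner_mul_le hr
    (summable_weightedNorm_of_le hθ (weightedNorm_D1_le r θ)) (memHs_hilbert hw) hw
  refine ⟨hsum, hle.trans ?_⟩
  have := hsNorm_nonneg r w
  have := hsNorm_nonneg r (hilbert w)
  have := wienerNorm_nonneg (r + 1) θ
  rw [sq]
  gcongr
  · exact wienerNorm_le_of_weightedNorm_le hθ (weightedNorm_D1_le r θ)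
  · exact hsNorm_le_of_weightedNorm_le hw (weightedNorm_hilbert_le r w)

lemma summable_trilinearTerm_and_abs_hsInner_hilbert_mul_D1_le (hr : 0 ≤ r)
    (hρ : Summable (weightedNorm (r + 1) ρ)) (hreal : isReal ρ) (hw : memHs (r + 1) w) :
    Summable (trilinearTerm r (hilbert ρ) (D1 w) w) ∧
      |hsInner r (mul (hilbert ρ) (D1 w)) w| ≤
        (r * 2 ^ (r / 2) + 1 / 2) * wienerNorm (r + 1) ρ * hsNorm r w ^ 2 := by
  have hle_ρ := weightedNorm_hilbert_le (r + 1) ρ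
  obtain ⟨hsum, hle⟩ := summable_trilinearTerm_and_abs_hsInner_mul_D1_self_le hr
    (summable_weightedNorm_of_le hρ hle_ρ) (isReal_hilbert hreal) hw
  refine ⟨hsum, hle.trans ?_⟩
  gcongr
  exact wienerNorm_le_of_weightedNorm_le hρ hle_ρ

theorem abs_hsInner_hilbert_mul_D1_sub_le (hr : 0 ≤ r) (hθ : memHs (r + 2) θ)
    (hρ : memHs (r + 2) ρ) (hreal : isReal ρ) :
    |hsInner r (mul (hilbert ρ) (D1 ρ) - mul (hilbert θ) (D1 θ)) (θ - ρ)| ≤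
      (2 ^ (r / 2) * wienerNorm (r + 1) θ +
        (r * 2 ^ (r / 2) + 1 / 2) * wienerNorm (r + 1) ρ) * hsNorm r (θ - ρ) ^ 2 := by
  have hwiener {c : FC} (hc : memHs (r + 2) c) : Summable (weightedNorm (r + 1) c) :=
    (summable_weightedNorm_and_wienerNorm_le (by linarith) hc).1
  have hw : memHs (r + 2) (θ - ρ) := memHs_sub hθ hρ
  obtain ⟨hsum_θ, hle_θ⟩ := summable_trilinearTerm_and_abs_hsInner_D1_mul_hilbert_le hr
    (hwiener hθ) (memHs_mono (by linarith) hw)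
  obtain ⟨hsum_ρ, hle_ρ⟩ := summable_trilinearTerm_and_abs_hsInner_hilbert_mul_D1_le hr
    (hwiener hρ) hreal (memHs_mono (by linarith) hw)
  rw [hilbert_mul_D1_sub (memHs_mono (by linarith) hθ) (memHs_mono (by linarith) hρ),
    hsInner_neg_left, hsInner_add_left (summable_hsInner_mul hsum_θ) (summable_hsInner_mul hsum_ρ),
    abs_neg, add_mul]
  exact (abs_add_le _ _).trans (add_le_add hle_θ hle_ρ)

end HilbertTransport

end FC

theorem statement11_general (s : ℝ) (hs : 2 ≤ s) :
    ∃ C > (0 : ℝ), ∀ θ ρ : FC, FC.memHs s θ → FC.memHs s ρ → FC.isReal ρ →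
      |FC.hsInner (s - 2)
          (FC.mul (FC.hilbert ρ) (FC.D1 ρ) - FC.mul (FC.hilbert θ) (FC.D1 θ)) (θ - ρ)|
        ≤ C * (FC.hsNorm s θ + FC.hsNorm s ρ) * FC.hsNorm (s - 2) (θ - ρ) ^ 2 := by
  obtain ⟨r, rfl⟩ : ∃ r, s = r + 2 := ⟨s - 2, by ring⟩
  have hr : 0 ≤ r := by linarith
  rw [add_sub_cancel_right]
  set K := √(∑' k, FC.wt (r + 1 - (r + 2)) k)
  set A : ℝ := 2 ^ (r / 2)
  have : 0 < A := by positivity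
  refine ⟨(A + (r * A + 1 / 2)) * K + 1, by positivity, fun θ ρ hθ hρ hreal => ?_⟩
  refine (FC.abs_hsInner_hilbert_mul_D1_sub_le hr hθ hρ hreal).trans ?_
  have hwiener {c : FC} (hc : FC.memHs (r + 2) c) :
      FC.wienerNorm (r + 1) c ≤ K * FC.hsNorm (r + 2) c :=
    (FC.summable_weightedNorm_and_wienerNorm_le (by linarith) hc).2
  have hθ0 := FC.hsNorm_nonneg (r + 2) θ
  have hρ0 := FC.hsNorm_nonneg (r + 2) ρ
  gcongr
  calc A * FC.wienerNorm (r + 1) θ + (r * A + 1 / 2) * FC.wienerNorm (r + 1) ρ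
      ≤ A * (K * FC.hsNorm (r + 2) θ) + (r * A + 1 / 2) * (K * FC.hsNorm (r + 2) ρ) := by
        gcongr
        exacts [hwiener hθ, hwiener hρ]
    _ ≤ ((A + (r * A + 1 / 2)) * K + 1) * (FC.hsNorm (r + 2) θ + FC.hsNorm (r + 2) ρ) := by
        have : 0 ≤ (r * A + 1 / 2) * (K * FC.hsNorm (r + 2) θ) := by positivity
        have : 0 ≤ A * (K * FC.hsNorm (r + 2) ρ) := by positivity
        linarith

/-- Let `s > 7/2`.  There is `C = C(s) > 0` such that for all
`θ, ρ ∈ H^s(𝕋)`: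
`|((𝓗ρ) ∂ₓρ − (𝓗θ) ∂ₓθ, θ − ρ)_{H^{s-2}}| ≤ C (‖θ‖_{H^s} + ‖ρ‖_{H^s}) ‖θ − ρ‖²_{H^{s-2}}`. -/
theorem statement11 (s : ℝ) (hs : 7 / 2 < s) :
    ∃ C > (0 : ℝ), ∀ θ ρ : FC,
      FC.memHs s θ → FC.memHs s ρ → FC.isReal θ → FC.isReal ρ →
      |FC.hsInner (s - 2)
          (FC.mul (FC.hilbert ρ) (FC.D1 ρ) - FC.mul (FC.hilbert θ) (FC.D1 θ)) (θ - ρ)|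
        ≤ C * (FC.hsNorm s θ + FC.hsNorm s ρ) * FC.hsNorm (s - 2) (θ - ρ) ^ 2 := by
  obtain ⟨C, hC, hbound⟩ := statement11_general s (by linarith)
  exact ⟨C, hC, fun θ ρ hθ hρ _ => hbound θ ρ hθ hρ⟩
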